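/- Pisier's inequality: let Z ~ N(0, I_n) and F : ℝⁿ → ℝ be differentiable with suitable integrability. Then for every λ ∈ ℝ, E[exp(λ|F(Z) − E F(Z)|)] ≤ 2·E[exp((λ²π²/8)·‖∇F(Z)‖²)]. -/

import Mathlib

open MeasureTheory Real ProbabilityTheory

/-! Let `X` and `Y` be independent copies of a centered Gaussian vector. Along the quarter circle
`X_θ = cos θ • X + sin θ • Y`, the increment `F Y - F X` is the average over `θ ∈ [0, π / 2]` of
`(π / 2) • DF(X_θ) Y_θ`, where `Y_θ` is the derivative of `X_θ` in `θ`, and by rotation invariance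
`(X_θ, Y_θ)` has the law of `(X, Y)` for every `θ`. Jensen's inequality, applied first to the mean
of `F X` and then to the average over `θ`, therefore gives the Maurey-Pisier comparison
`E Φ(F Y - E F X) ≤ E Φ((π / 2) • DF(X) Y)` for convex `Φ`. Take `Φ z = exp ‖z‖`: conditionally on
`X`, the real variable `DF(X) Y` is a centered Gaussian, and `exp |t| ≤ exp t + exp (-t)` reduces
the right-hand side to its moment generating function.

The growth condition `‖z‖ ≤ Φ z` makes every function occurring in Jensen's inequality integrable as
soon as the upper bound is finite. -/

section Jensen

variable {α G : Type*} {mα : MeasurableSpace α} {ν : Measure α} [NormedAddCommGroup G]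
  {Φ : G → ℝ} {f : α → G}

lemma integrable_and_integrable_comp_of_lintegral_ne_top (hΦ_cont : Continuous Φ)
    (hΦ_norm : ∀ z, ‖z‖ ≤ Φ z) (hf : AEStronglyMeasurable f ν)
    (h_fin : ∫⁻ a, ENNReal.ofReal (Φ (f a)) ∂ν ≠ ⊤) :
    Integrable f ν ∧ Integrable (fun a ↦ Φ (f a)) ν := by
  have h_comp : Integrable (fun a ↦ Φ (f a)) ν :=
    (lintegral_ofReal_ne_top_iff_integrable (hΦ_cont.comp_aestronglyMeasurable hf)
      (ae_of_all _ fun a ↦ (norm_nonneg _).trans (hΦ_norm _))).1 h_fin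
  exact ⟨h_comp.mono' hf (ae_of_all _ fun a ↦ hΦ_norm _), h_comp⟩

variable [NormedSpace ℝ G] [CompleteSpace G] [IsProbabilityMeasure ν]

lemma ofReal_map_integral_le_lintegral (hΦ : ConvexOn ℝ Set.univ Φ) (hΦ_cont : Continuous Φ)
    (hΦ_norm : ∀ z, ‖z‖ ≤ Φ z) (hf : AEStronglyMeasurable f ν) :
    ENNReal.ofReal (Φ (∫ a, f a ∂ν)) ≤ ∫⁻ a, ENNReal.ofReal (Φ (f a)) ∂ν := by
  by_cases h_top : ∫⁻ a, ENNReal.ofReal (Φ (f a)) ∂ν = ⊤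
  · simp [h_top]
  obtain ⟨hf_int, h_comp⟩ :=
    integrable_and_integrable_comp_of_lintegral_ne_top hΦ_cont hΦ_norm hf h_top
  rw [← ofReal_integral_eq_lintegral_ofReal h_comp
    (ae_of_all _ fun a ↦ (norm_nonneg _).trans (hΦ_norm _))]
  exact ENNReal.ofReal_le_ofReal <|
    hΦ.map_integral_le hΦ_cont.continuousOn isClosed_univ (by simp) hf_int h_comp

lemma ofReal_map_sub_integral_le_lintegral (hΦ : ConvexOn ℝ Set.univ Φ) (hΦ_cont : Continuous Φ)
    (hΦ_norm : ∀ z, ‖z‖ ≤ Φ z) (hf : AEStronglyMeasurable f ν) (c : G) :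
    ENNReal.ofReal (Φ (c - ∫ a, f a ∂ν)) ≤ ∫⁻ a, ENNReal.ofReal (Φ (c - f a)) ∂ν := by
  by_cases h_top : ∫⁻ a, ENNReal.ofReal (Φ (c - f a)) ∂ν = ⊤
  · simp [h_top]
  have h_meas : AEStronglyMeasurable (fun a ↦ c - f a) ν := aestronglyMeasurable_const.sub hf
  have hf_int : Integrable f ν := by
    simpa [Pi.sub_def] using (integrable_const c).sub
      (integrable_and_integrable_comp_of_lintegral_ne_top hΦ_cont hΦ_norm h_meas h_top).1
  simpa [integral_sub (integrable_const c) hf_int] using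
    ofReal_map_integral_le_lintegral hΦ hΦ_cont hΦ_norm h_meas

lemma ofReal_map_sub_le_lintegral_of_hasDerivAt {γ γ' : ℝ → G} (hΦ : ConvexOn ℝ Set.univ Φ)
    (hΦ_cont : Continuous Φ) (hΦ_norm : ∀ z, ‖z‖ ≤ Φ z)
    (hγ : ∀ s ∈ Set.Icc 0 1, HasDerivAt γ (γ' s) s) :
    ENNReal.ofReal (Φ (γ 1 - γ 0)) ≤ ∫⁻ s in Set.Ioc 0 1, ENNReal.ofReal (Φ (γ' s)) := by
  by_cases h_top : ∫⁻ s in Set.Ioc 0 1, ENNReal.ofReal (Φ (γ' s)) = ⊤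
  · simp [h_top]
  have : IsProbabilityMeasure (volume.restrict (Set.Ioc (0 : ℝ) 1)) := ⟨by simp⟩
  have h_meas : AEStronglyMeasurable γ' (volume.restrict (Set.Ioc (0 : ℝ) 1)) :=
    (aestronglyMeasurable_deriv γ _).congr <|
      (ae_restrict_mem measurableSet_Ioc).mono fun s hs ↦ (hγ s (Set.Ioc_subset_Icc_self hs)).deriv
  have h_int : IntervalIntegrable γ' volume 0 1 :=
    (intervalIntegrable_iff_integrableOn_Ioc_of_le zero_le_one).2
      (integrable_and_integrable_comp_of_lintegral_ne_top hΦ_cont hΦ_norm h_meas h_top).1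
  rw [← intervalIntegral.integral_eq_sub_of_hasDerivAt (by simpa using hγ) h_int,
    intervalIntegral.integral_of_le zero_le_one]
  exact ofReal_map_integral_le_lintegral hΦ hΦ_cont hΦ_norm h_meas

end Jensen

section Rotation

variable {E G : Type*} [NormedAddCommGroup E] [NormedSpace ℝ E]
  [NormedAddCommGroup G] [NormedSpace ℝ G] {F : E → G}

lemma rotation_zero_fst (p : E × E) : (ContinuousLinearMap.rotation 0 p).1 = p.1 := by
  simp [ContinuousLinearMap.rotation_apply]

lemma rotation_pi_div_two_fst (p : E × E) :
    (ContinuousLinearMap.rotation (π / 2) p).1 = p.2 := by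
  simp [ContinuousLinearMap.rotation_apply]

lemma hasDerivAt_rotation_fst (p : E × E) (θ : ℝ) :
    HasDerivAt (fun θ ↦ (ContinuousLinearMap.rotation θ p).1)
      (ContinuousLinearMap.rotation θ p).2 θ := by
  simp only [ContinuousLinearMap.rotation_apply]
  exact ((hasDerivAt_cos θ).smul_const p.1).add ((hasDerivAt_sin θ).smul_const p.2)

lemma hasDerivAt_comp_rotation_fst (hF : Differentiable ℝ F) (p : E × E) (s : ℝ) :
    HasDerivAt (fun s ↦ F (ContinuousLinearMap.rotation (π / 2 * s) p).1)
      ((π / 2) • fderiv ℝ F (ContinuousLinearMap.rotation (π / 2 * s) p).1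
        (ContinuousLinearMap.rotation (π / 2 * s) p).2) s := by
  have h_angle : HasDerivAt (fun s : ℝ ↦ π / 2 * s) (π / 2) s := by
    simpa using (hasDerivAt_id s).const_mul (π / 2)
  exact ((hF _).hasFDerivAt.comp_hasDerivAt _ (hasDerivAt_rotation_fst p _)).scomp s h_angle

lemma continuous_uncurry_rotation :
    Continuous fun q : ℝ × (E × E) ↦ ContinuousLinearMap.rotation q.1 q.2 := by
  simp only [ContinuousLinearMap.rotation_apply]
  fun_prop

variable [SecondCountableTopology E] [MeasurableSpace E] [OpensMeasurableSpace E]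

lemma stronglyMeasurable_uncurry_fderiv (hF : Differentiable ℝ F) :
    StronglyMeasurable fun p : E × E ↦ fderiv ℝ F p.1 p.2 := by
  refine stronglyMeasurable_of_tendsto (f := fun (c : ℝ) (p : E × E) ↦
    c • (F (p.1 + c⁻¹ • p.2) - F p.1)) Filter.atTop (fun c ↦ ?_)
    (tendsto_pi_nhds.2 fun p ↦ (hF p.1).hasFDerivAt.lim_real p.2)
  have hF_cont := hF.continuous
  exact Continuous.stronglyMeasurable (by fun_prop)

lemma measurable_ofReal_map_smul_fderiv {Φ : G → ℝ} (hΦ_cont : Continuous Φ)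
    (hF : Differentiable ℝ F) (c : ℝ) :
    Measurable fun p : E × E ↦ ENNReal.ofReal (Φ (c • fderiv ℝ F p.1 p.2)) :=
  (hΦ_cont.comp_stronglyMeasurable
    ((stronglyMeasurable_uncurry_fderiv hF).const_smul c)).measurable.ennreal_ofReal

end Rotation

lemma convexOn_exp_norm {G : Type*} [SeminormedAddCommGroup G] [NormedSpace ℝ G] :
    ConvexOn ℝ Set.univ fun z : G ↦ rexp ‖z‖ :=
  (convexOn_exp.subset (Set.subset_univ _)
    (isPreconnected_univ.image _ continuous_norm.continuousOn).ordConnected.convex).comp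
      convexOn_univ_norm (exp_strictMono.monotone.monotoneOn _)

section Gaussian

variable {E : Type*} [NormedAddCommGroup E] [NormedSpace ℝ E] [CompleteSpace E]
  [SecondCountableTopology E] [MeasurableSpace E] [BorelSpace E] {μ : Measure E} [IsGaussian μ]

section MaureyPisier

variable {G : Type*} [NormedAddCommGroup G] [NormedSpace ℝ G] [CompleteSpace G]
  {Φ : G → ℝ} {F : E → G}

theorem lintegral_prod_map_sub_le_lintegral_prod_map_fderiv (hμ : μ[id] = 0)
    (hΦ : ConvexOn ℝ Set.univ Φ) (hΦ_cont : Continuous Φ) (hΦ_norm : ∀ z, ‖z‖ ≤ Φ z)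
    (hF : Differentiable ℝ F) :
    ∫⁻ p, ENNReal.ofReal (Φ (F p.2 - F p.1)) ∂(μ.prod μ) ≤
      ∫⁻ p, ENNReal.ofReal (Φ ((π / 2) • fderiv ℝ F p.1 p.2)) ∂(μ.prod μ) := by
  set Ψ : E × E → ENNReal := fun p ↦ ENNReal.ofReal (Φ ((π / 2) • fderiv ℝ F p.1 p.2))
  let R (s : ℝ) : E × E →L[ℝ] E × E := ContinuousLinearMap.rotation (π / 2 * s)
  have hΨ : Measurable Ψ := measurable_ofReal_map_smul_fderiv hΦ_cont hF (π / 2)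
  have hR : Measurable fun q : (E × E) × ℝ ↦ R q.2 q.1 :=
    (continuous_uncurry_rotation.comp
      (by fun_prop : Continuous fun q : (E × E) × ℝ ↦ (π / 2 * q.2, q.1))).measurable
  have h_path (p : E × E) :
      ENNReal.ofReal (Φ (F p.2 - F p.1)) ≤ ∫⁻ s in Set.Ioc 0 1, Ψ (R s p) := by
    have h := ofReal_map_sub_le_lintegral_of_hasDerivAt hΦ hΦ_cont hΦ_norm
      fun s _ ↦ hasDerivAt_comp_rotation_fst hF p s
    rwa [mul_one, mul_zero, rotation_pi_div_two_fst, rotation_zero_fst] at h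
  have h_rot (s : ℝ) : ∫⁻ p, Ψ (R s p) ∂(μ.prod μ) = ∫⁻ p, Ψ p ∂(μ.prod μ) := by
    rw [← lintegral_map hΨ (R s).continuous.measurable,
      IsGaussian.map_rotation_eq_self hμ]
  calc ∫⁻ p, ENNReal.ofReal (Φ (F p.2 - F p.1)) ∂(μ.prod μ)
    _ ≤ ∫⁻ p, (∫⁻ s in Set.Ioc 0 1, Ψ (R s p)) ∂(μ.prod μ) := lintegral_mono h_path
    _ = ∫⁻ s in Set.Ioc 0 1, ∫⁻ p, Ψ (R s p) ∂(μ.prod μ) :=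
      lintegral_lintegral_swap (hΨ.comp hR).aemeasurable
    _ = ∫⁻ p, Ψ p ∂(μ.prod μ) := by simp [h_rot]

theorem lintegral_map_sub_integral_le_lintegral_map_fderiv (hμ : μ[id] = 0)
    (hΦ : ConvexOn ℝ Set.univ Φ) (hΦ_cont : Continuous Φ) (hΦ_norm : ∀ z, ‖z‖ ≤ Φ z)
    (hF : Differentiable ℝ F) :
    ∫⁻ x, ENNReal.ofReal (Φ (F x - ∫ x', F x' ∂μ)) ∂μ ≤
      ∫⁻ x, ∫⁻ y, ENNReal.ofReal (Φ ((π / 2) • fderiv ℝ F x y)) ∂μ ∂μ := by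
  have hF_cont := hF.continuous
  calc ∫⁻ x, ENNReal.ofReal (Φ (F x - ∫ x', F x' ∂μ)) ∂μ
    _ ≤ ∫⁻ y, ∫⁻ x, ENNReal.ofReal (Φ (F y - F x)) ∂μ ∂μ := lintegral_mono fun y ↦
      ofReal_map_sub_integral_le_lintegral hΦ hΦ_cont hΦ_norm hF_cont.aestronglyMeasurable (F y)
    _ = ∫⁻ p, ENNReal.ofReal (Φ (F p.2 - F p.1)) ∂(μ.prod μ) :=
      (lintegral_prod_symm (fun p ↦ ENNReal.ofReal (Φ (F p.2 - F p.1)))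
        (by fun_prop : Continuous fun p : E × E ↦
          Φ (F p.2 - F p.1)).measurable.ennreal_ofReal.aemeasurable).symm
    _ ≤ ∫⁻ p, ENNReal.ofReal (Φ ((π / 2) • fderiv ℝ F p.1 p.2)) ∂(μ.prod μ) :=
      lintegral_prod_map_sub_le_lintegral_prod_map_fderiv hμ hΦ hΦ_cont hΦ_norm hF
    _ = ∫⁻ x, ∫⁻ y, ENNReal.ofReal (Φ ((π / 2) • fderiv ℝ F x y)) ∂μ ∂μ :=
      lintegral_prod _ (measurable_ofReal_map_smul_fderiv hΦ_cont hF (π / 2)).aemeasurable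

end MaureyPisier

lemma lintegral_exp_strongDual (hμ : μ[id] = 0) (L : StrongDual ℝ E) :
    ∫⁻ y, ENNReal.ofReal (rexp (L y)) ∂μ = ENNReal.ofReal (rexp (Var[L; μ] / 2)) := by
  have h_mean : μ[L] = 0 := by
    simpa [L.integral_comp_id_comm IsGaussian.integrable_id] using congrArg L hμ
  have h_law := IsGaussian.map_eq_gaussianReal (μ := μ) L
  have h_int : Integrable (fun y ↦ rexp (L y)) μ := by
    have h := integrable_exp_mul_gaussianReal (μ := μ[L]) (v := Var[L; μ].toNNReal) 1
    rw [← h_law] at h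
    simpa [Function.comp_def] using h.comp_measurable (by fun_prop)
  have h_mgf := mgf_gaussianReal h_law 1
  simp only [mgf, one_mul, h_mean, zero_add, one_pow, mul_one,
    Real.coe_toNNReal _ (variance_nonneg _ _)] at h_mgf
  rw [← ofReal_integral_eq_lintegral_ofReal h_int (ae_of_all _ fun _ ↦ (exp_pos _).le), h_mgf]

lemma lintegral_exp_abs_strongDual_le (hμ : μ[id] = 0) (L : StrongDual ℝ E) :
    ∫⁻ y, ENNReal.ofReal (rexp |L y|) ∂μ ≤ 2 * ENNReal.ofReal (rexp (Var[L; μ] / 2)) := by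
  calc ∫⁻ y, ENNReal.ofReal (rexp |L y|) ∂μ
    _ ≤ ∫⁻ y, (ENNReal.ofReal (rexp (L y)) + ENNReal.ofReal (rexp ((-L) y))) ∂μ :=
      lintegral_mono fun y ↦ by
        rcases abs_choice (L y) with h | h <;> simp [h]
    _ = 2 * ENNReal.ofReal (rexp (Var[L; μ] / 2)) := by
      rw [lintegral_add_left (by fun_prop), lintegral_exp_strongDual hμ,
        lintegral_exp_strongDual hμ, FunLike.coe_neg, variance_neg, two_mul]

theorem pisier_inequality_general (hμ : μ[id] = 0) {F : E → ℝ} (hF : Differentiable ℝ F) (l : ℝ) :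
    ∫⁻ x, ENNReal.ofReal (rexp (l * |F x - ∫ x', F x' ∂μ|)) ∂μ ≤
      2 * ∫⁻ x, ENNReal.ofReal (rexp (l ^ 2 * π ^ 2 / 8 * Var[fderiv ℝ F x; μ])) ∂μ := by
  calc ∫⁻ x, ENNReal.ofReal (rexp (l * |F x - ∫ x', F x' ∂μ|)) ∂μ
    _ ≤ ∫⁻ x, ENNReal.ofReal (rexp ‖l * F x - ∫ x', l * F x' ∂μ‖) ∂μ := by
      gcongr with x
      rw [integral_const_mul, ← mul_sub, norm_mul, norm_eq_abs, norm_eq_abs]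
      gcongr
      exact le_abs_self l
    _ ≤ ∫⁻ x, ∫⁻ y, ENNReal.ofReal (rexp ‖(π / 2) • fderiv ℝ (fun z ↦ l * F z) x y‖) ∂μ ∂μ :=
      lintegral_map_sub_integral_le_lintegral_map_fderiv hμ convexOn_exp_norm (by fun_prop)
        (fun z ↦ (le_add_of_nonneg_right zero_le_one).trans (add_one_le_exp ‖z‖)) (hF.const_mul l)
    _ = ∫⁻ x, ∫⁻ y, ENNReal.ofReal (rexp |((π / 2 * l) • fderiv ℝ F x) y|) ∂μ ∂μ := by
      simp [fderiv_const_mul (hF _), mul_assoc, abs_mul, abs_div]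
    _ ≤ ∫⁻ x, 2 * ENNReal.ofReal (rexp (Var[(π / 2 * l) • fderiv ℝ F x; μ] / 2)) ∂μ :=
      lintegral_mono fun x ↦ lintegral_exp_abs_strongDual_le hμ _
    _ = 2 * ∫⁻ x, ENNReal.ofReal (rexp (l ^ 2 * π ^ 2 / 8 * Var[fderiv ℝ F x; μ])) ∂μ := by
      rw [lintegral_const_mul' _ _ (by finiteness)]
      congr! 5 with x
      rw [FunLike.coe_smul, variance_smul]
      ring

end Gaussian

/-- Pisier's inequality: for a standard Gaussian vector Z in ℝⁿ and differentiable F,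
E[exp(λ|F(Z) − E F(Z)|)] ≤ 2 E[exp((λ²π²/8)‖∇F(Z)‖²)], both sides possibly infinite. -/
theorem pisier_inequality {n : ℕ}
    (μ : Measure (EuclideanSpace ℝ (Fin n)))
    (hμ : μ = (Measure.pi fun _ : Fin n => gaussianReal 0 1).map
        ⇑(EuclideanSpace.equiv (Fin n) ℝ).symm)
    (F : EuclideanSpace ℝ (Fin n) → ℝ) (hF : Differentiable ℝ F)
    (hFint : Integrable F μ) (l : ℝ) :
    ∫⁻ ω, ENNReal.ofReal (Real.exp (l * |F ω - ∫ ω', F ω' ∂μ|)) ∂μ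
      ≤ 2 * ∫⁻ ω, ENNReal.ofReal (Real.exp (l ^ 2 * π ^ 2 / 8 * ‖gradient F ω‖ ^ 2)) ∂μ := by
  obtain rfl : μ = stdGaussian (EuclideanSpace ℝ (Fin n)) := hμ.trans map_pi_eq_stdGaussian
  simpa [variance_dual_stdGaussian, gradient] using
    pisier_inequality_general integral_id_stdGaussian hF l
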